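/- Let X be a complex Banach space and T a bounded linear operator on X. Then T is norm-unimodal if and only if there exist a constant r > 1 and N ∈ ℕ such that for every m ≥ N there exists a nonzero vector x_m ∈ X with lim_{k→∞} ‖T^k x_m‖ = 0 and ‖T^i x_m‖ ≥ r^i‖x_m‖ for all i with N ≤ i ≤ m. -/

import Mathlib

open Filter Topology MeasureTheory
open scoped Classical ENNReal

noncomputable def distFreq {X : Type*} [MetricSpace X] (f : X → X) (x y : X) (τ : ℝ) (n : ℕ) : ℝ :=
  (((Finset.range n).filter fun i => dist (f^[i] x) (f^[i] y) < τ).card : ℝ) / n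

def DistributionallyChaoticPair {X : Type*} [MetricSpace X] (f : X → X) (x y : X) : Prop :=
  (∀ τ : ℝ, 0 < τ → Filter.limsup (distFreq f x y τ) Filter.atTop = 1) ∧
  (∃ ε : ℝ, 0 < ε ∧ Filter.liminf (distFreq f x y ε) Filter.atTop = 0)

def DistributionallyChaotic {X : Type*} [MetricSpace X] (f : X → X) : Prop :=
  ∃ Λ : Set X, ¬Λ.Countable ∧
    ∀ x ∈ Λ, ∀ y ∈ Λ, x ≠ y → DistributionallyChaoticPair f x y

def LiYorkePair {X : Type*} [MetricSpace X] (f : X → X) (x y : X) : Prop :=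
  0 < Filter.limsup (fun n => edist (f^[n] x) (f^[n] y)) Filter.atTop ∧
  Filter.liminf (fun n => edist (f^[n] x) (f^[n] y)) Filter.atTop = 0

def LiYorkeChaotic {X : Type*} [MetricSpace X] (f : X → X) : Prop :=
  ∃ Γ : Set X, ¬Γ.Countable ∧ ∀ x ∈ Γ, ∀ y ∈ Γ, x ≠ y → LiYorkePair f x y

def NormUnimodal {X : Type*} [NormedAddCommGroup X] [NormedSpace ℂ X] (T : X →L[ℂ] X) : Prop :=
  ∃ r : ℝ, 1 < r ∧ ∀ m : ℕ, ∃ x : X, x ≠ 0 ∧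
    Filter.Tendsto (fun k => ‖(T ^ k) x‖) Filter.atTop (nhds 0) ∧
    ∀ i : ℕ, 1 ≤ i → i ≤ m → r ^ i * ‖x‖ ≤ ‖(T ^ i) x‖

/-!
If the orbit of `x` satisfies `r ^ i * ‖x‖ ≤ ‖T ^ i x‖` only from time `N` on, restart it at the
last time `j ≤ N` at which `‖T ^ j x‖ ≤ r ^ j * ‖x‖`. After `j` the orbit stays above the geometric
sequence that it has not exceeded at `j`, so it grows at rate `r` from the very first step.
-/

theorem exists_le_forall_pow_mul_le_add {R : Type*} [Semiring R] [LinearOrder R] [IsOrderedRing R]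
    {r : R} (hr : 0 ≤ r) {a : ℕ → R} {N m : ℕ}
    (h : ∀ i, N ≤ i → i ≤ N + m → r ^ i * a 0 ≤ a i) :
    ∃ j ≤ N, ∀ i ≤ m, r ^ i * a j ≤ a (i + j) := by
  set j := Nat.findGreatest (fun k => a k ≤ r ^ k * a 0) N
  have hjN : j ≤ N := Nat.findGreatest_le N
  have haj : a j ≤ r ^ j * a 0 :=
    Nat.findGreatest_spec (P := fun k => a k ≤ r ^ k * a 0) N.zero_le (by simp)
  have above : ∀ k, j < k → k ≤ N + m → r ^ k * a 0 ≤ a k := fun k hjk hk =>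
    (le_total N k).elim (fun hNk => h k hNk hk)
      fun hkN => le_of_not_ge (Nat.findGreatest_is_greatest hjk hkN)
  refine ⟨j, hjN, fun i hi => ?_⟩
  rcases i.eq_zero_or_pos with rfl | hi_pos
  · simp
  · calc r ^ i * a j ≤ r ^ i * (r ^ j * a 0) := mul_le_mul_of_nonneg_left haj (pow_nonneg hr i)
      _ = r ^ (i + j) * a 0 := by rw [pow_add, mul_assoc]
      _ ≤ a (i + j) := above (i + j) (by lia) (by lia)

section Endomorphism

variable {F X : Type*} [FunLike F X X] [Monoid F] [IsMulApplyEqComp F X]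

theorem pow_add_apply (T : F) (i j : ℕ) (x : X) : (T ^ (i + j)) x = (T ^ i) ((T ^ j) x) := by
  rw [pow_add, mul_apply_eq_comp]

theorem pow_apply_ne_zero_of_le [Zero X] [ZeroHomClass F X X] (T : F) {j k : ℕ} {x : X}
    (hjk : j ≤ k) (hk : (T ^ k) x ≠ 0) : (T ^ j) x ≠ 0 := by
  intro hj
  apply hk
  rw [← Nat.sub_add_cancel hjk, pow_add_apply, hj, map_zero]

variable [IsOneApplyEqSelf F X] [NormedAddGroup X] [ZeroHomClass F X X]

theorem exists_pow_apply_ne_zero_forall_pow_mul_norm_le (T : F) {r : ℝ} (hr : 0 < r) {N m : ℕ}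
    {x : X} (hx : x ≠ 0) (h : ∀ i, N ≤ i → i ≤ N + m → r ^ i * ‖x‖ ≤ ‖(T ^ i) x‖) :
    ∃ j, (T ^ j) x ≠ 0 ∧ ∀ i ≤ m, r ^ i * ‖(T ^ j) x‖ ≤ ‖(T ^ i) ((T ^ j) x)‖ := by
  have hTN : (T ^ N) x ≠ 0 := norm_pos_iff.mp <|
    (mul_pos (pow_pos hr N) (norm_pos_iff.mpr hx)).trans_le (h N le_rfl (N.le_add_right m))
  have hgrowth : ∀ i, N ≤ i → i ≤ N + m → r ^ i * ‖(T ^ 0) x‖ ≤ ‖(T ^ i) x‖ := by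
    simpa only [pow_zero, one_apply_eq_self] using h
  obtain ⟨j, hjN, hj⟩ := exists_le_forall_pow_mul_le_add hr.le (a := fun i => ‖(T ^ i) x‖) hgrowth
  exact ⟨j, pow_apply_ne_zero_of_le T hjN hTN, fun i hi => by
    simpa only [pow_add_apply] using hj i hi⟩

theorem stmt_3_general (T : F) :
    (∃ r : ℝ, 1 < r ∧ ∀ m : ℕ, ∃ x : X, x ≠ 0 ∧
      Tendsto (fun k => ‖(T ^ k) x‖) atTop (𝓝 0) ∧
      ∀ i : ℕ, 1 ≤ i → i ≤ m → r ^ i * ‖x‖ ≤ ‖(T ^ i) x‖) ↔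
    ∃ (r : ℝ) (N : ℕ), 1 < r ∧ ∀ m : ℕ, N ≤ m → ∃ x : X, x ≠ 0 ∧
      Tendsto (fun k => ‖(T ^ k) x‖) atTop (𝓝 0) ∧
      ∀ i : ℕ, N ≤ i → i ≤ m → r ^ i * ‖x‖ ≤ ‖(T ^ i) x‖ := by
  constructor
  · rintro ⟨r, hr, h⟩
    exact ⟨r, 1, hr, fun m _ => h m⟩
  · rintro ⟨r, N, hr, h⟩
    refine ⟨r, hr, fun m => ?_⟩
    obtain ⟨x, hx, hlim, hgrowth⟩ := h (N + m) (N.le_add_right m)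
    obtain ⟨j, hj_ne, hj⟩ :=
      exists_pow_apply_ne_zero_forall_pow_mul_norm_le T (zero_lt_one.trans hr) hx hgrowth
    refine ⟨(T ^ j) x, hj_ne, ?_, fun i _ hi => hj i hi⟩
    simpa only [Function.comp_def, pow_add_apply] using hlim.comp (tendsto_add_atTop_nat j)

end Endomorphism

/-- Equivalent characterization of norm-unimodality. -/
theorem stmt_3 {X : Type*} [NormedAddCommGroup X] [NormedSpace ℂ X] [CompleteSpace X]
    (T : X →L[ℂ] X) :
    NormUnimodal T ↔
      ∃ (r : ℝ) (N : ℕ), 1 < r ∧ ∀ m : ℕ, N ≤ m → ∃ x : X, x ≠ 0 ∧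
        Filter.Tendsto (fun k => ‖(T ^ k) x‖) Filter.atTop (nhds 0) ∧
        ∀ i : ℕ, N ≤ i → i ≤ m → r ^ i * ‖x‖ ≤ ‖(T ^ i) x‖ :=
  stmt_3_general T
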